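/- For every fixed integer t ≥ 1 and every ε > 0 there exists n₀ such that for all n ≥ n₀ and every p with 800·n·2^{2n−2t}·(log n)/(n−t)! ≤ p ≤ 1, with probability at least 1 − ε every t-intersecting subfamily of (S_n)_p of maximum size is trivial. -/

import Mathlib

/-- The number of indices on which two permutations of `Fin n` agree. -/
def agreements {n : ℕ} (σ π : Equiv.Perm (Fin n)) : ℕ :=
  (Finset.univ.filter (fun i => σ i = π i)).card

/-- A family of permutations is `t`-intersecting if any two of its members agree
on at least `t` indices. -/
def IsTIntersecting {n : ℕ} (t : ℕ) (F : Finset (Equiv.Perm (Fin n))) : Prop :=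
  ∀ σ ∈ F, ∀ π ∈ F, t ≤ agreements σ π

/-- A family of permutations is trivial if there is a `t`-set of indices `I` and
prescribed values `x i` such that every member sends each `i ∈ I` to `x i`. -/
def IsTrivial {n : ℕ} (t : ℕ) (F : Finset (Equiv.Perm (Fin n))) : Prop :=
  ∃ I : Finset (Fin n), I.card = t ∧ ∃ x : Fin n → Fin n,
    ∀ σ ∈ F, ∀ i ∈ I, σ i = x i

-- `randomSubsetProb ground p P` is the probability that the `p`-random subset of
-- `ground` (each element kept independently with probability `p`) satisfies `P`.
open Classical in
noncomputable def randomSubsetProb {α : Type*} (ground : Finset α) (p : ℝ)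
    (P : Finset α → Prop) : ℝ :=
  ∑ W ∈ ground.powerset,
    if P W then p ^ W.card * (1 - p) ^ (ground.card - W.card) else 0


section Frag
open Finset

/-- Points coloured `0`. -/
def zs {X : Type*} [Fintype X] (a : X → Fin 4) : Finset X := univ.filter (fun x => a x = 0)

/-- Recolour the set `T` by `0`. -/
def recol {X : Type*} [DecidableEq X] (a : X → Fin 4) (T : Finset X) : X → Fin 4 :=
  fun x => if x ∈ T then 0 else a x

lemma mem_zs {X : Type*} [Fintype X] (a : X → Fin 4) (x : X) : x ∈ zs a ↔ a x = 0 := by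
  simp [zs]

lemma zs_recol {X : Type*} [Fintype X] [DecidableEq X] (a : X → Fin 4) (T : Finset X) :
    zs (recol a T) = zs a ∪ T := by
  ext x
  simp only [mem_zs, recol, mem_union]
  by_cases h : x ∈ T <;> simp [h]

lemma card_recol_le {X : Type*} [Fintype X] [DecidableEq X] (a' : X → Fin 4) (T : Finset X) :
    (univ.filter (fun a : X → Fin 4 => recol a T = a')).card ≤ 4 ^ T.card := by
  classical
  have h : (univ.filter (fun a : X → Fin 4 => recol a T = a')).card
      ≤ (univ : Finset (T → Fin 4)).card := by
    apply Finset.card_le_card_of_injOn (fun a => fun x : T => a x)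
    · intro a _; simp
    · intro a ha b hb hab
      simp only [coe_filter, mem_univ, true_and, Set.mem_ofPred_eq] at ha hb
      funext x
      by_cases hx : x ∈ T
      · exact congrFun hab ⟨x, hx⟩
      · have h1 := congrFun ha x
        have h2 := congrFun hb x
        simp only [recol, hx, if_false] at h1 h2
        rw [h1, h2]
  simpa using h

lemma frag_exists {X ι : Type*} [Fintype X] [DecidableEq X] (I : Finset ι) (S : ι → Finset X) :
    ∃ (χ : ι → (X → Fin 4) → Finset X) (A : (X → Fin 4) → Finset X),
      (∀ a, A a = ∅ ∨ ∃ i ∈ I, A a = S i) ∧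
      ∀ i ∈ I, ∀ a, χ i a ⊆ S i ∧ (∃ i' ∈ I, S i' ⊆ zs a ∪ χ i a) ∧
        χ i a ⊆ A (recol a (χ i a)) := by
  classical
  have key : ∀ i : ι, ∀ a : X → Fin 4, ∃ C : Finset X, i ∈ I →
      (C ⊆ S i ∧ (∃ i' ∈ I, S i' ⊆ zs a ∪ C) ∧
        ∀ j ∈ I, S j ⊆ zs a ∪ S i → C.card ≤ (S j \ zs a).card) := by
    intro i a
    by_cases hi : i ∈ I
    · obtain ⟨i', hi', hmin⟩ := Finset.exists_min_image (I.filter (fun j => S j ⊆ zs a ∪ S i))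
        (fun j => (S j \ zs a).card) ⟨i, by simp [hi]⟩
      rw [mem_filter] at hi'
      refine ⟨S i' \ zs a, fun _ => ⟨?_, ⟨i', hi'.1, ?_⟩, ?_⟩⟩
      · intro x hx
        rw [mem_sdiff] at hx
        have := hi'.2 hx.1
        rw [mem_union] at this
        tauto
      · intro x hx
        by_cases hz : x ∈ zs a <;> simp [hz, hx]
      · intro j hj hjs
        exact hmin j (by simp [hj, hjs])
    · exact ⟨∅, fun h => absurd h hi⟩
  choose χ hχ using key
  refine ⟨χ, fun a' => if h : ∃ i ∈ I, S i ⊆ zs a' then S h.choose else ∅, ?_, ?_⟩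
  · intro a
    dsimp only
    split_ifs with h
    · exact Or.inr ⟨_, h.choose_spec.1, rfl⟩
    · exact Or.inl rfl
  · intro i hi a
    obtain ⟨h1, h2, h3⟩ := hχ i a hi
    refine ⟨h1, h2, ?_⟩
    have hex : ∃ i' ∈ I, S i' ⊆ zs (recol a (χ i a)) := by rwa [zs_recol]
    dsimp only
    rw [dif_pos hex]
    set j := hex.choose
    have hj : j ∈ I := hex.choose_spec.1
    have hjs : S j ⊆ zs a ∪ χ i a := by
      exact hex.choose_spec.2.trans (zs_recol a _).subset
    have h4 := h3 j hj (hjs.trans (union_subset_union_right h1))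
    have h5 : S j \ zs a ⊆ χ i a := by
      intro x hx
      rw [mem_sdiff] at hx
      have := hjs hx.1
      rw [mem_union] at this
      tauto
    have h6 := Finset.eq_of_subset_of_card_le h5 h4
    rw [← h6]
    exact sdiff_subset

theorem frag {X ι : Type*} [Fintype X] [DecidableEq X] (I : Finset ι) (S : ι → Finset X)
    (k : ℕ) (L R : ℝ) (hL : 0 ≤ L) (hR : 0 < R) (hk : ∀ i ∈ I, (S i).card ≤ k)
    (hS : ∀ T : Finset X, ((I.filter (fun i => T ⊆ S i)).card : ℝ) ≤ L * (R⁻¹) ^ T.card) :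
    ∃ χ : ι → (X → Fin 4) → Finset X,
      (∀ i ∈ I, ∀ a, χ i a ⊆ S i ∧ ∃ i' ∈ I, S i' ⊆ zs a ∪ χ i a) ∧
      ∀ y : ℝ, 0 ≤ y → ∑ a : X → Fin 4, ∑ i ∈ I, y ^ (χ i a).card ≤
        (4 : ℝ) ^ Fintype.card X * L * (1 + 4 * y / R) ^ k := by
  classical
  obtain ⟨χ, A, hA, hχ⟩ := frag_exists I S
  refine ⟨χ, fun i hi a => ⟨(hχ i hi a).1, (hχ i hi a).2.1⟩, ?_⟩
  intro y hy
  have hAk : ∀ a, (A a).card ≤ k := by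
    intro a
    rcases hA a with h | ⟨i, hi, h⟩
    · simp [h]
    · rw [h]; exact hk i hi
  -- the bound for each recoloured colouring
  have step : ∀ a' : X → Fin 4,
      ∑ q ∈ (univ ×ˢ I).filter (fun q : (X → Fin 4) × ι => recol q.1 (χ q.2 q.1) = a'),
        y ^ (χ q.2 q.1).card ≤ L * (1 + 4 * y / R) ^ k := by
    intro a'
    have e1 : ∑ q ∈ (univ ×ˢ I).filter (fun q : (X → Fin 4) × ι => recol q.1 (χ q.2 q.1) = a'),
        y ^ (χ q.2 q.1).card
        = ∑ T ∈ (A a').powerset,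
          ∑ q ∈ ((univ ×ˢ I).filter (fun q : (X → Fin 4) × ι =>
            recol q.1 (χ q.2 q.1) = a')).filter (fun q => χ q.2 q.1 = T),
            y ^ (χ q.2 q.1).card := by
      rw [Finset.sum_fiberwise_of_maps_to]
      intro q hq
      simp only [mem_filter, mem_product, mem_univ, true_and] at hq
      rw [mem_powerset, ← hq.2]
      exact (hχ q.2 hq.1 q.1).2.2
    rw [e1]
    calc _ ≤ ∑ T ∈ (A a').powerset, L * (4 * y / R) ^ T.card := by
          apply Finset.sum_le_sum
          intro T _
          have hc : ((((univ ×ˢ I).filter (fun q : (X → Fin 4) × ι =>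
            recol q.1 (χ q.2 q.1) = a')).filter (fun q => χ q.2 q.1 = T)).card : ℝ)
              ≤ (4:ℝ) ^ T.card * (L * (R⁻¹) ^ T.card) := by
            have hsub : ((univ ×ˢ I).filter (fun q : (X → Fin 4) × ι =>
              recol q.1 (χ q.2 q.1) = a')).filter (fun q => χ q.2 q.1 = T)
              ⊆ (univ.filter (fun a : X → Fin 4 => recol a T = a')) ×ˢ
                (I.filter (fun i => T ⊆ S i)) := by
              intro q hq
              simp only [mem_filter, mem_product, mem_univ, true_and] at hq ⊢
              obtain ⟨⟨h1, h2⟩, h3⟩ := hq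
              refine ⟨by rw [← h3]; exact h2, h1, ?_⟩
              rw [← h3]
              exact (hχ q.2 h1 q.1).1
            have h1 := Finset.card_le_card hsub
            rw [card_product] at h1
            have h2 := card_recol_le a' T
            calc _ ≤ (((univ.filter (fun a : X → Fin 4 => recol a T = a')).card *
                (I.filter (fun i => T ⊆ S i)).card : ℕ) : ℝ) := by exact_mod_cast h1
              _ = ((univ.filter (fun a : X → Fin 4 => recol a T = a')).card : ℝ) *
                ((I.filter (fun i => T ⊆ S i)).card : ℝ) := by push_cast; ring
              _ ≤ _ := by
                apply mul_le_mul _ (hS T) (by positivity) (by positivity)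
                exact_mod_cast h2
          calc _ = ∑ q ∈ ((univ ×ˢ I).filter (fun q : (X → Fin 4) × ι =>
            recol q.1 (χ q.2 q.1) = a')).filter (fun q => χ q.2 q.1 = T), y ^ T.card := by
                apply Finset.sum_congr rfl
                intro q hq
                rw [mem_filter] at hq
                rw [hq.2]
            _ ≤ (4:ℝ) ^ T.card * (L * (R⁻¹) ^ T.card) * y ^ T.card := by
                rw [sum_const, nsmul_eq_mul]
                apply mul_le_mul_of_nonneg_right hc (by positivity)
            _ = _ := by
                rw [div_eq_mul_inv, mul_pow, mul_pow]; ring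
      _ = L * (1 + 4 * y / R) ^ (A a').card := by
          rw [← mul_sum]
          congr 1
          have := Finset.sum_pow_mul_eq_add_pow (4 * y / R) 1 (A a')
          simp only [one_pow, mul_one] at this
          rw [this, add_comm]
      _ ≤ _ := by
          apply mul_le_mul_of_nonneg_left _ hL
          apply pow_le_pow_right₀ _ (hAk a')
          have : 0 ≤ 4 * y / R := by positivity
          linarith
  calc ∑ a : X → Fin 4, ∑ i ∈ I, y ^ (χ i a).card
      = ∑ q ∈ (univ ×ˢ I : Finset ((X → Fin 4) × ι)), y ^ (χ q.2 q.1).card := by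
        rw [Finset.sum_product]
    _ = ∑ a' : X → Fin 4,
      ∑ q ∈ (univ ×ˢ I).filter (fun q : (X → Fin 4) × ι => recol q.1 (χ q.2 q.1) = a'),
        y ^ (χ q.2 q.1).card := by
        rw [Finset.sum_fiberwise]
    _ ≤ ∑ a' : X → Fin 4, L * (1 + 4 * y / R) ^ k := Finset.sum_le_sum (fun a' _ => step a')
    _ = _ := by
        rw [sum_const, nsmul_eq_mul]
        simp [card_univ, mul_assoc]

/-- Two rounds of exposure. -/
theorem two_round {X ι : Type*} [Fintype X] [DecidableEq X] (I : Finset ι) (S : ι → Finset X)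
    (k J : ℕ) (L R : ℝ) (hL : 0 < L) (hR : 0 < R) (hk : ∀ i ∈ I, (S i).card ≤ k)
    (hS : ∀ T : Finset X, ((I.filter (fun i => T ⊆ S i)).card : ℝ) ≤ L * (R⁻¹) ^ T.card)
    (hI : L ≤ 2 * I.card)
    (h1 : 32 * (1 + 8 / R) ^ k ≤ (2:ℝ) ^ J) (h2 : (1 + 256 / R) ^ J ≤ 2) :
    4 * (((univ : Finset ((X → Fin 4) × (X → Fin 4))).filter
      (fun c => ¬ ∃ i ∈ I, S i ⊆ zs c.1 ∪ zs c.2)).card : ℝ) ≤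
      (4 : ℝ) ^ Fintype.card X * (4 : ℝ) ^ Fintype.card X := by
  classical
  obtain ⟨χ, hχ, hsum⟩ := frag I S k L R hL.le hR hk hS
  set M : ℝ := (4 : ℝ) ^ Fintype.card X with hM
  have hMpos : 0 < M := by positivity
  set good : (X → Fin 4) → Finset ι := fun a => I.filter (fun i => (χ i a).card ≤ J) with hgood
  set B1 : Finset (X → Fin 4) := univ.filter (fun a => (2 : ℝ) * (good a).card < I.card) with hB1
  -- first round
  have hB1card : 8 * (B1.card : ℝ) ≤ M := by
    have e := hsum 2 (by norm_num)
    have e2 : (B1.card : ℝ) * ((I.card : ℝ) / 2 * 2 ^ J) ≤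
        ∑ a : X → Fin 4, ∑ i ∈ I, (2:ℝ) ^ (χ i a).card := by
      calc (B1.card : ℝ) * ((I.card : ℝ) / 2 * 2 ^ J)
          = ∑ a ∈ B1, ((I.card : ℝ) / 2 * 2 ^ J) := by rw [sum_const, nsmul_eq_mul]
        _ ≤ ∑ a ∈ B1, ∑ i ∈ I, (2:ℝ) ^ (χ i a).card := by
            apply Finset.sum_le_sum
            intro a ha
            simp only [hB1, mem_filter, mem_univ, true_and] at ha
            have hb : ((I.card : ℝ)) / 2 ≤ ((I.filter (fun i => ¬ (χ i a).card ≤ J)).card : ℝ) := by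
              have := Finset.card_filter_add_card_filter_not (s := I) (fun i => (χ i a).card ≤ J)
              have h3 : ((good a).card : ℝ) + ((I.filter (fun i => ¬ (χ i a).card ≤ J)).card : ℝ)
                = I.card := by
                rw [hgood]; exact_mod_cast this
              linarith
            calc ((I.card : ℝ) / 2 * 2 ^ J)
                ≤ ((I.filter (fun i => ¬ (χ i a).card ≤ J)).card : ℝ) * 2 ^ J := by gcongr
              _ = ∑ i ∈ I.filter (fun i => ¬ (χ i a).card ≤ J), (2:ℝ) ^ J := by
                  rw [sum_const, nsmul_eq_mul]
              _ ≤ ∑ i ∈ I.filter (fun i => ¬ (χ i a).card ≤ J), (2:ℝ) ^ (χ i a).card := by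
                  apply Finset.sum_le_sum
                  intro i hi
                  rw [mem_filter] at hi
                  apply pow_le_pow_right₀ (by norm_num)
                  omega
              _ ≤ _ := by
                  apply Finset.sum_le_sum_of_subset_of_nonneg (filter_subset _ _)
                  intros; positivity
        _ ≤ _ := by
            apply Finset.sum_le_sum_of_subset_of_nonneg (subset_univ _)
            intros; positivity
    have e3 : (4 * 2 / R : ℝ) = 8 / R := by norm_num
    rw [e3] at e
    have e4 : 0 ≤ (1 + 8 / R) ^ k := by positivity
    have e5 : (B1.card : ℝ) * (L / 4 * (32 * (1 + 8 / R) ^ k)) ≤ M * L * (1 + 8 / R) ^ k := by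
      refine le_trans ?_ (e2.trans e)
      apply mul_le_mul_of_nonneg_left _ (by positivity)
      apply mul_le_mul _ h1 (by positivity) (by positivity)
      linarith
    have e6 : 0 < L * (1 + 8 / R) ^ k := by positivity
    have e7 : (8 * (B1.card : ℝ)) * (L * (1 + 8 / R) ^ k) ≤ M * (L * (1 + 8 / R) ^ k) := by
      nlinarith
    exact le_of_mul_le_mul_right e7 e6
  -- second round
  have hround2 : ∀ a, a ∉ B1 → 8 * ((univ.filter (fun b : X → Fin 4 =>
      ¬ ∃ i ∈ I, S i ⊆ zs a ∪ zs b)).card : ℝ) ≤ M := by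
    intro a ha
    have hga : (I.card : ℝ) ≤ 2 * (good a).card := by
      simp only [hB1, mem_filter, mem_univ, true_and, not_lt] at ha
      exact ha
    obtain ⟨ψ, hψ, hsum2⟩ := frag (good a) (fun i => χ i a) J L R hL.le hR
      (fun i hi => (mem_filter.mp hi).2) (by
        intro T
        refine le_trans ?_ (hS T)
        norm_cast
        apply card_le_card
        intro i hi
        rw [mem_filter] at hi ⊢
        have := (mem_filter.mp hi.1).1
        exact ⟨this, hi.2.trans (hχ i this a).1⟩)
    set B2 := (univ.filter (fun b : X → Fin 4 => ¬ ∃ i ∈ I, S i ⊆ zs a ∪ zs b)) with hB2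
    have e := hsum2 64 (by norm_num)
    have e2 : (B2.card : ℝ) * ((good a).card * 64) ≤
        ∑ b : X → Fin 4, ∑ i ∈ good a, (64:ℝ) ^ (ψ i b).card := by
      calc (B2.card : ℝ) * ((good a).card * 64)
          = ∑ b ∈ B2, ∑ i ∈ good a, (64:ℝ) := by
            rw [sum_const, nsmul_eq_mul, sum_const, nsmul_eq_mul]
        _ ≤ ∑ b ∈ B2, ∑ i ∈ good a, (64:ℝ) ^ (ψ i b).card := by
            apply Finset.sum_le_sum
            intro b hb
            apply Finset.sum_le_sum
            intro i hi
            apply le_self_pow₀ (by norm_num)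
            intro h0
            rw [card_eq_zero] at h0
            obtain ⟨_, i', hi', hs⟩ := hψ i hi b
            rw [h0, union_empty] at hs
            obtain ⟨_, i'', hi'', hs'⟩ := hχ i' (mem_filter.mp hi').1 a
            rw [hB2, mem_filter] at hb
            exact hb.2 ⟨i'', hi'', hs'.trans (union_subset_union_right hs)⟩
        _ ≤ _ := by
            apply Finset.sum_le_sum_of_subset_of_nonneg (subset_univ _)
            intros; positivity
    have e3 : (4 * 64 / R : ℝ) = 256 / R := by norm_num
    rw [e3] at e
    have e4 : (B2.card : ℝ) * (L / 4 * 64) ≤ M * L * 2 := by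
      calc (B2.card : ℝ) * (L / 4 * 64) ≤ (B2.card : ℝ) * ((good a).card * 64) := by
            gcongr; linarith
        _ ≤ _ := e2.trans e
        _ ≤ _ := by gcongr
    have e7 : (8 * (B2.card : ℝ)) * L ≤ M * L := by nlinarith
    exact le_of_mul_le_mul_right e7 hL
  -- combine
  have hcount : (((univ : Finset ((X → Fin 4) × (X → Fin 4))).filter
      (fun c => ¬ ∃ i ∈ I, S i ⊆ zs c.1 ∪ zs c.2)).card : ℝ) =
      ∑ a : X → Fin 4, ((univ.filter (fun b : X → Fin 4 =>
      ¬ ∃ i ∈ I, S i ⊆ zs a ∪ zs b)).card : ℝ) := by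
    norm_cast
    rw [card_filter, ← univ_product_univ, sum_product]
    simp only [card_filter]
  rw [hcount]
  have hMcard : (Fintype.card (X → Fin 4) : ℝ) = M := by simp [hM]
  calc 4 * ∑ a : X → Fin 4, ((univ.filter (fun b : X → Fin 4 =>
      ¬ ∃ i ∈ I, S i ⊆ zs a ∪ zs b)).card : ℝ)
      ≤ 4 * ∑ a : X → Fin 4, ((if a ∈ B1 then M else 0) + M / 8) := by
        gcongr with a
        by_cases ha : a ∈ B1
        · rw [if_pos ha]
          have : ((univ.filter (fun b : X → Fin 4 =>
            ¬ ∃ i ∈ I, S i ⊆ zs a ∪ zs b)).card : ℝ) ≤ M := by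
            rw [← hMcard]
            exact_mod_cast card_le_univ _
          linarith
        · rw [if_neg ha]
          have := hround2 a ha
          linarith
    _ = 4 * (B1.card * M + M * (M / 8)) := by
        rw [sum_add_distrib, ← sum_filter, sum_const, sum_const, nsmul_eq_mul, nsmul_eq_mul,
          card_univ, hMcard]
        simp
    _ ≤ M * M := by nlinarith

lemma exists_swap_colour : ∃ e : Equiv.Perm (Fin 4 × Fin 4),
    ∀ x, ¬ ((x.1 = 0 ∨ x.2 = 0) ∧ ((e x).1 = 0 ∨ (e x).2 = 0)) := by
  refine ⟨Equiv.swap (0,0) (1,1) * Equiv.swap (0,1) (1,2) * Equiv.swap (0,2) (1,3) *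
    Equiv.swap (0,3) (2,1) * Equiv.swap (1,0) (2,2) * Equiv.swap (2,0) (2,3) *
    Equiv.swap (3,0) (3,1), ?_⟩
  decide

theorem exists_disjoint {X ι : Type*} [Fintype X] [DecidableEq X]
    (I₁ I₂ : Finset ι) (S₁ S₂ : ι → Finset X)
    (k J : ℕ) (L₁ L₂ R : ℝ) (hL₁ : 0 < L₁) (hL₂ : 0 < L₂) (hR : 0 < R)
    (hk₁ : ∀ i ∈ I₁, (S₁ i).card ≤ k) (hk₂ : ∀ i ∈ I₂, (S₂ i).card ≤ k)
    (hS₁ : ∀ T : Finset X, ((I₁.filter (fun i => T ⊆ S₁ i)).card : ℝ) ≤ L₁ * (R⁻¹) ^ T.card)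
    (hS₂ : ∀ T : Finset X, ((I₂.filter (fun i => T ⊆ S₂ i)).card : ℝ) ≤ L₂ * (R⁻¹) ^ T.card)
    (hI₁ : L₁ ≤ 2 * I₁.card) (hI₂ : L₂ ≤ 2 * I₂.card)
    (h1 : 32 * (1 + 8 / R) ^ k ≤ (2:ℝ) ^ J) (h2 : (1 + 256 / R) ^ J ≤ 2) :
    ∃ i ∈ I₁, ∃ j ∈ I₂, Disjoint (S₁ i) (S₂ j) := by
  classical
  have r1 := two_round I₁ S₁ k J L₁ R hL₁ hR hk₁ hS₁ hI₁ h1 h2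
  have r2 := two_round I₂ S₂ k J L₂ R hL₂ hR hk₂ hS₂ hI₂ h1 h2
  obtain ⟨e, he⟩ := exists_swap_colour
  set M : ℝ := (4 : ℝ) ^ Fintype.card X with hM
  have hMpos : 0 < M := by positivity
  set Bd₁ := (univ : Finset ((X → Fin 4) × (X → Fin 4))).filter
      (fun c => ¬ ∃ i ∈ I₁, S₁ i ⊆ zs c.1 ∪ zs c.2) with hBd₁
  set Bd₂ := (univ : Finset ((X → Fin 4) × (X → Fin 4))).filter
      (fun c => ¬ ∃ i ∈ I₂, S₂ i ⊆ zs c.1 ∪ zs c.2) with hBd₂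
  set φ : (X → Fin 4) × (X → Fin 4) → (X → Fin 4) × (X → Fin 4) := fun c =>
    (fun x => (e (c.1 x, c.2 x)).1, fun x => (e (c.1 x, c.2 x)).2) with hφ
  have hφinj : Function.Injective φ := by
    intro c d hcd
    have h : ∀ x, (c.1 x, c.2 x) = (d.1 x, d.2 x) := by
      intro x
      apply e.injective
      have h1 := congrFun (congrArg Prod.fst hcd) x
      have h2 := congrFun (congrArg Prod.snd hcd) x
      exact Prod.ext h1 h2
    ext x
    · exact congrArg Fin.val (congrArg Prod.fst (h x))
    · exact congrArg Fin.val (congrArg Prod.snd (h x))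
  have hpre : (univ.filter (fun c => φ c ∈ Bd₂)).card ≤ Bd₂.card := by
    apply Finset.card_le_card_of_injOn φ
    · intro c hc
      simpa using hc
    · exact hφinj.injOn
  have hex : ∃ c, c ∉ Bd₁ ∪ univ.filter (fun c => φ c ∈ Bd₂) := by
    by_contra hcon
    push Not at hcon
    have h3 : (univ : Finset ((X → Fin 4) × (X → Fin 4))).card ≤
        (Bd₁ ∪ univ.filter (fun c => φ c ∈ Bd₂)).card :=
      card_le_card (fun c _ => hcon c)
    have h4 := h3.trans (card_union_le _ _)
    have h5 : ((univ : Finset ((X → Fin 4) × (X → Fin 4))).card : ℝ) = M * M := by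
      simp [hM, card_univ]
    have h6 : ((univ : Finset ((X → Fin 4) × (X → Fin 4))).card : ℝ) ≤ Bd₁.card + Bd₂.card := by
      exact_mod_cast h4.trans (Nat.add_le_add_left hpre _)
    rw [h5] at h6
    have : 0 < M * M := by positivity
    linarith
  obtain ⟨c, hc⟩ := hex
  simp only [mem_union, not_or, mem_filter, mem_univ, true_and, hBd₁, hBd₂, not_not] at hc
  obtain ⟨⟨i, hi, hi'⟩, ⟨j, hj, hj'⟩⟩ := hc
  refine ⟨i, hi, j, hj, ?_⟩
  rw [Finset.disjoint_left]
  intro x hx1 hx2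
  have k1 := hi' hx1
  have k2 := hj' hx2
  simp only [mem_union, mem_zs, hφ] at k1 k2
  exact he (c.1 x, c.2 x) ⟨k1, k2⟩

end Frag


section Spread
open Finset

/-- The graph of a permutation as a set of cells. -/
def gr {n : ℕ} (σ : Equiv.Perm (Fin n)) : Finset (Fin n × Fin n) :=
  univ.filter (fun x => σ x.1 = x.2)

lemma mem_gr {n : ℕ} (σ : Equiv.Perm (Fin n)) (x : Fin n × Fin n) :
    x ∈ gr σ ↔ σ x.1 = x.2 := by simp [gr]

lemma gr_eq_image {n : ℕ} (σ : Equiv.Perm (Fin n)) : gr σ = univ.image (fun i => (i, σ i)) := by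
  ext ⟨a, b⟩
  simp [mem_gr]

lemma card_gr {n : ℕ} (σ : Equiv.Perm (Fin n)) : (gr σ).card = n := by
  rw [gr_eq_image, card_image_of_injective]
  · simp
  · intro a b h
    exact congrArg Prod.fst h

lemma card_gr_inter {n : ℕ} (σ π : Equiv.Perm (Fin n)) :
    (gr σ ∩ gr π).card = agreements σ π := by
  unfold agreements
  symm
  apply Finset.card_bij (fun i _ => (i, σ i))
  · intro i hi
    simp only [mem_filter, mem_univ, true_and] at hi
    simp [mem_gr, hi]
  · intro a _ b _ h
    exact congrArg Prod.fst h
  · rintro ⟨a, b⟩ h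
    simp only [mem_inter, mem_gr] at h
    exact ⟨a, by simp [h.1, h.2], by simp [h.1]⟩

lemma card_fix {n : ℕ} (σ : Equiv.Perm (Fin n)) (I : Finset (Fin n)) :
    (univ.filter (fun π : Equiv.Perm (Fin n) => ∀ i ∈ I, π i = σ i)).card
      = (n - I.card).factorial := by
  have h := Fintype.card_congr (Equiv.Perm.subtypeEquivSubtypePerm (fun i : Fin n => i ∉ I))
  rw [Fintype.card_perm] at h
  have h2 : Fintype.card {i : Fin n // i ∉ I} = n - I.card := by
    rw [Fintype.card_subtype_compl]; simp
  rw [h2] at h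
  rw [h, Fintype.card_subtype]
  apply Finset.card_bij (fun π _ => σ⁻¹ * π)
  · intro π hπ
    simp only [mem_filter, mem_univ, true_and, not_not] at hπ ⊢
    intro a ha
    simp [hπ a ha]
  · intro a _ b _ hab
    exact mul_left_cancel hab
  · intro π hπ
    simp only [mem_filter, mem_univ, true_and, not_not] at hπ
    refine ⟨σ * π, ?_, by simp⟩
    simp only [mem_filter, mem_univ, true_and]
    intro i hi
    simp [hπ i hi]

lemma card_fix_der {n : ℕ} (σ : Equiv.Perm (Fin n)) (I : Finset (Fin n)) :
    (univ.filter (fun π : Equiv.Perm (Fin n) => ∀ i, i ∈ I ↔ π i = σ i)).card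
      = numDerangements (n - I.card) := by
  have h := Fintype.card_congr (derangements.subtypeEquiv (fun i : Fin n => i ∉ I))
  rw [card_derangements_eq_numDerangements] at h
  have h2 : Fintype.card {i : Fin n // i ∉ I} = n - I.card := by
    rw [Fintype.card_subtype_compl]; simp
  rw [h2] at h
  rw [h, Fintype.card_subtype]
  apply Finset.card_bij (fun π _ => σ⁻¹ * π)
  · intro π hπ
    simp only [mem_filter, mem_univ, true_and, not_not] at hπ ⊢
    intro a
    rw [hπ a, Function.mem_fixedPoints, Function.IsFixedPt]
    simp [Equiv.symm_apply_eq]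
  · intro a _ b _ hab
    exact mul_left_cancel hab
  · intro π hπ
    simp only [mem_filter, mem_univ, true_and, not_not] at hπ
    refine ⟨σ * π, ?_, by simp⟩
    simp only [mem_filter, mem_univ, true_and]
    intro i
    rw [hπ i, Function.mem_fixedPoints, Function.IsFixedPt]
    simp

/-- A subset of the graph is described by its set of rows. -/
lemma sub_gr {n : ℕ} (σ : Equiv.Perm (Fin n)) (B : Finset (Fin n × Fin n)) (h : B ⊆ gr σ) :
    (B.image Prod.fst).card = B.card ∧
    ∀ π : Equiv.Perm (Fin n), B ⊆ gr π ↔ ∀ i ∈ B.image Prod.fst, π i = σ i := by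
  constructor
  · apply card_image_of_injOn
    intro x hx y hy hxy
    have h1 := (mem_gr _ _).1 (h hx)
    have h2 := (mem_gr _ _).1 (h hy)
    refine Prod.ext hxy ?_
    rw [← h1, ← h2, hxy]
  · intro π
    constructor
    · intro hπ i hi
      rw [mem_image] at hi
      obtain ⟨x, hx, rfl⟩ := hi
      rw [(mem_gr _ _).1 (h hx), (mem_gr _ _).1 (hπ hx)]
    · intro hπ x hx
      rw [mem_gr, hπ x.1 (mem_image_of_mem _ hx)]
      exact (mem_gr _ _).1 (h hx)

lemma card_star_le {n : ℕ} (B : Finset (Fin n × Fin n)) :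
    (univ.filter (fun π : Equiv.Perm (Fin n) => B ⊆ gr π)).card ≤ (n - B.card).factorial := by
  by_cases h : ∃ σ : Equiv.Perm (Fin n), B ⊆ gr σ
  · obtain ⟨σ, hσ⟩ := h
    obtain ⟨h1, h2⟩ := sub_gr σ B hσ
    rw [← h1, ← card_fix σ]
    apply card_le_card
    intro π hπ
    rw [mem_filter] at hπ ⊢
    exact ⟨mem_univ _, (h2 π).1 hπ.2⟩
  · rw [filter_false_of_mem]
    · simp
    · intro σ _ hσ
      exact h ⟨σ, hσ⟩

theorem spread_approx {n : ℕ} (R : ℝ) (hR : 0 < R) (q : ℕ) :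
    ∀ m : ℕ, ∀ F : Finset (Equiv.Perm (Fin n)), F.card ≤ m →
    ∃ (𝒮 : Finset (Finset (Fin n × Fin n))) (F' : Finset (Equiv.Perm (Fin n))), F' ⊆ F ∧
      (∀ σ ∈ F, σ ∉ F' → ∃ B ∈ 𝒮, B ⊆ gr σ) ∧
      (∀ B ∈ 𝒮, B.card ≤ q ∧ ∃ G ⊆ F, G.Nonempty ∧ (∀ σ ∈ G, B ⊆ gr σ) ∧
        ∀ T : Finset (Fin n × Fin n), Disjoint T B →
          ((G.filter (fun σ => T ⊆ gr σ)).card : ℝ) ≤ G.card * (R⁻¹) ^ T.card) ∧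
      (F' = ∅ ∨ ∃ B : Finset (Fin n × Fin n), q < B.card ∧
        0 < (F'.filter (fun σ => B ⊆ gr σ)).card ∧
        (F'.card : ℝ) ≤ R ^ B.card * (F'.filter (fun σ => B ⊆ gr σ)).card) := by
  classical
  intro m
  induction m with
  | zero =>
    intro F hF
    refine ⟨∅, ∅, by simp, ?_, by simp, Or.inl rfl⟩
    intro σ hσ
    have : F = ∅ := card_eq_zero.1 (by omega)
    simp [this] at hσ
  | succ m ih =>
    intro F hF
    rcases F.eq_empty_or_nonempty with rfl | hne
    · exact ⟨∅, ∅, by simp, by simp, by simp, Or.inl rfl⟩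
    obtain ⟨B, hB, hmax⟩ := Finset.exists_max_image
      (univ.filter (fun B : Finset (Fin n × Fin n) =>
        (F.card : ℝ) * (R⁻¹) ^ B.card ≤ (F.filter (fun σ => B ⊆ gr σ)).card))
      (fun B => B.card) ⟨∅, by simp⟩
    rw [mem_filter] at hB
    have hFpos : 0 < (F.card : ℝ) := by exact_mod_cast hne.card_pos
    have hGpos : 0 < ((F.filter (fun σ => B ⊆ gr σ)).card : ℝ) :=
      lt_of_lt_of_le (by positivity) hB.2
    by_cases hq : q < B.card
    · refine ⟨∅, F, Subset.rfl, fun σ h h' => absurd h h', by simp,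
        Or.inr ⟨B, hq, by exact_mod_cast hGpos, ?_⟩⟩
      have := mul_le_mul_of_nonneg_left hB.2 (by positivity : (0:ℝ) ≤ R ^ B.card)
      calc (F.card : ℝ) = R ^ B.card * (F.card * (R⁻¹) ^ B.card) := by
            rw [inv_pow]; field_simp
        _ ≤ _ := this
    · set G := F.filter (fun σ => B ⊆ gr σ) with hG
      have hGne : G.Nonempty := card_pos.1 (by exact_mod_cast hGpos)
      have hGF : G ⊆ F := filter_subset _ _
      obtain ⟨𝒮, F', h1, h2, h3, h4⟩ := ih (F \ G) (by
        rw [card_sdiff_of_subset hGF]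
        have := hGne.card_pos
        omega)
      refine ⟨insert B 𝒮, F', h1.trans sdiff_subset, ?_, ?_, h4⟩
      · intro σ hσ hσ'
        by_cases hσG : σ ∈ G
        · exact ⟨B, mem_insert_self _ _, (mem_filter.1 hσG).2⟩
        · obtain ⟨B', hB', hB''⟩ := h2 σ (mem_sdiff.2 ⟨hσ, hσG⟩) hσ'
          exact ⟨B', mem_insert_of_mem hB', hB''⟩
      · intro B' hB'
        rw [mem_insert] at hB'
        rcases hB' with rfl | hB'
        · refine ⟨by omega, G, hGF, hGne, fun σ hσ => (mem_filter.1 hσ).2, ?_⟩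
          intro T hT
          rcases T.eq_empty_or_nonempty with rfl | hTne
          · simp
          have hnot : ¬ (F.card : ℝ) * (R⁻¹) ^ (B' ∪ T).card ≤
              (F.filter (fun σ => (B' ∪ T) ⊆ gr σ)).card := by
            intro hcon
            have := hmax (B' ∪ T) (mem_filter.2 ⟨mem_univ _, hcon⟩)
            rw [card_union_of_disjoint hT.symm] at this
            have := hTne.card_pos
            omega
          push Not at hnot
          have e1 : G.filter (fun σ => T ⊆ gr σ) = F.filter (fun σ => (B' ∪ T) ⊆ gr σ) := by
            ext σ
            simp only [hG, mem_filter, union_subset_iff, and_assoc]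
          rw [e1]
          refine hnot.le.trans ?_
          rw [card_union_of_disjoint hT.symm, pow_add, ← mul_assoc]
          exact mul_le_mul_of_nonneg_right hB.2 (by positivity)
        · obtain ⟨k1, G', k2, k3⟩ := h3 B' hB'
          exact ⟨k1, G', k2.trans sdiff_subset, k3⟩

lemma half_avoid {n : ℕ} (R : ℝ) (hR : 0 < R) (q : ℕ) (hq : 2 * (q : ℝ) ≤ R)
    (G : Finset (Equiv.Perm (Fin n))) (B B' : Finset (Fin n × Fin n)) (hB' : B'.card ≤ q)
    (hsp : ∀ T : Finset (Fin n × Fin n), Disjoint T B →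
          ((G.filter (fun σ => T ⊆ gr σ)).card : ℝ) ≤ G.card * (R⁻¹) ^ T.card) :
    (G.card : ℝ) ≤ 2 * ((G.filter (fun σ => Disjoint (gr σ \ B) B')).card : ℝ) := by
  classical
  have hsub : G.filter (fun σ => ¬ Disjoint (gr σ \ B) B') ⊆
      (B' \ B).biUnion (fun x => G.filter (fun σ => {x} ⊆ gr σ)) := by
    intro σ hσ
    rw [mem_filter, Finset.not_disjoint_iff] at hσ
    obtain ⟨hσ, x, hx, hx'⟩ := hσ
    rw [mem_sdiff] at hx
    rw [mem_biUnion]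
    exact ⟨x, mem_sdiff.2 ⟨hx', hx.2⟩, mem_filter.2 ⟨hσ, by simpa using hx.1⟩⟩
  have h1 : ((G.filter (fun σ => ¬ Disjoint (gr σ \ B) B')).card : ℝ) ≤ q * (G.card * R⁻¹) := by
    calc ((G.filter (fun σ => ¬ Disjoint (gr σ \ B) B')).card : ℝ)
        ≤ (((B' \ B).biUnion (fun x => G.filter (fun σ => {x} ⊆ gr σ))).card : ℝ) := by
          exact_mod_cast card_le_card hsub
      _ ≤ ∑ x ∈ B' \ B, ((G.filter (fun σ => {x} ⊆ gr σ)).card : ℝ) := by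
          exact_mod_cast card_biUnion_le
      _ ≤ ∑ x ∈ B' \ B, (G.card * R⁻¹ : ℝ) := by
          apply sum_le_sum
          intro x hx
          have := hsp {x} (by
            rw [disjoint_singleton_left]
            exact (mem_sdiff.1 hx).2)
          simpa using this
      _ = ((B' \ B).card : ℝ) * (G.card * R⁻¹) := by rw [sum_const, nsmul_eq_mul]
      _ ≤ _ := by
          gcongr
          exact (card_le_card sdiff_subset).trans hB'
  have h2 := Finset.card_filter_add_card_filter_not (s := G) (fun σ => Disjoint (gr σ \ B) B')
  have h3 : ((G.filter (fun σ => Disjoint (gr σ \ B) B')).card : ℝ) +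
    ((G.filter (fun σ => ¬ Disjoint (gr σ \ B) B')).card : ℝ) = G.card := by exact_mod_cast h2
  have h4 : (q : ℝ) * (G.card * R⁻¹) ≤ G.card / 2 := by
    have : (q : ℝ) * R⁻¹ ≤ 1 / 2 := by
      rw [← div_eq_mul_inv, div_le_iff₀ hR]; linarith
    have hg : (0:ℝ) ≤ G.card := by positivity
    nlinarith
  linarith

theorem spread_inter {n t : ℕ} (R : ℝ) (hR : 0 < R) (q J : ℕ) (hq : 2 * (q : ℝ) ≤ R)
    (h1 : 32 * (1 + 8 / R) ^ n ≤ (2:ℝ) ^ J) (h2 : (1 + 256 / R) ^ J ≤ 2)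
    (F : Finset (Equiv.Perm (Fin n))) (hF : IsTIntersecting t F)
    (B₁ B₂ : Finset (Fin n × Fin n)) (hB₁ : B₁.card ≤ q) (hB₂ : B₂.card ≤ q)
    (G₁ G₂ : Finset (Equiv.Perm (Fin n))) (hG₁ : G₁ ⊆ F) (hG₂ : G₂ ⊆ F)
    (hn₁ : G₁.Nonempty) (hn₂ : G₂.Nonempty)
    (hs₁ : ∀ T : Finset (Fin n × Fin n), Disjoint T B₁ →
          ((G₁.filter (fun σ => T ⊆ gr σ)).card : ℝ) ≤ G₁.card * (R⁻¹) ^ T.card)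
    (hs₂ : ∀ T : Finset (Fin n × Fin n), Disjoint T B₂ →
          ((G₂.filter (fun σ => T ⊆ gr σ)).card : ℝ) ≤ G₂.card * (R⁻¹) ^ T.card) :
    t ≤ (B₁ ∩ B₂).card := by
  classical
  have spr : ∀ (G : Finset (Equiv.Perm (Fin n))) (B B' : Finset (Fin n × Fin n)),
      (∀ T : Finset (Fin n × Fin n), Disjoint T B →
          ((G.filter (fun σ => T ⊆ gr σ)).card : ℝ) ≤ G.card * (R⁻¹) ^ T.card) →
      ∀ T : Finset (Fin n × Fin n), (((G.filter (fun σ => Disjoint (gr σ \ B) B')).filter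
        (fun σ => T ⊆ gr σ \ B)).card : ℝ) ≤ G.card * (R⁻¹) ^ T.card := by
    intro G B B' hs T
    by_cases hT : Disjoint T B
    · refine le_trans ?_ (hs T hT)
      norm_cast
      apply card_le_card
      intro σ hσ
      simp only [mem_filter] at hσ ⊢
      exact ⟨hσ.1.1, hσ.2.trans sdiff_subset⟩
    · rw [filter_false_of_mem]
      · simp only [card_empty, Nat.cast_zero]; positivity
      · intro σ _ hσ
        exact hT (disjoint_of_subset_left hσ sdiff_disjoint)
  obtain ⟨σ, hσ, π, hπ, hd⟩ := exists_disjoint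
    (G₁.filter (fun σ => Disjoint (gr σ \ B₁) B₂)) (G₂.filter (fun σ => Disjoint (gr σ \ B₂) B₁))
    (fun σ => gr σ \ B₁) (fun σ => gr σ \ B₂) n J G₁.card G₂.card R
    (by exact_mod_cast hn₁.card_pos) (by exact_mod_cast hn₂.card_pos) hR
    (fun σ _ => (card_le_card sdiff_subset).trans (card_gr σ).le)
    (fun σ _ => (card_le_card sdiff_subset).trans (card_gr σ).le)
    (spr G₁ B₁ B₂ hs₁) (spr G₂ B₂ B₁ hs₂)
    (half_avoid R hR q hq G₁ B₁ B₂ hB₂ hs₁) (half_avoid R hR q hq G₂ B₂ B₁ hB₁ hs₂) h1 h2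
  rw [mem_filter] at hσ hπ
  have hag := hF σ (hG₁ hσ.1) π (hG₂ hπ.1)
  rw [← card_gr_inter] at hag
  refine hag.trans (card_le_card ?_)
  intro x hx
  rw [mem_inter] at hx ⊢
  by_cases x1 : x ∈ B₁ <;> by_cases x2 : x ∈ B₂
  · exact ⟨x1, x2⟩
  · exact absurd x1 (Finset.disjoint_left.1 hπ.2 (mem_sdiff.2 ⟨hx.2, x2⟩))
  · exact absurd x2 (Finset.disjoint_left.1 hσ.2 (mem_sdiff.2 ⟨hx.1, x1⟩))
  · exact absurd (mem_sdiff.2 ⟨hx.2, x2⟩) (Finset.disjoint_left.1 hd (mem_sdiff.2 ⟨hx.1, x1⟩))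

end Spread


section Stability
open Finset

lemma three_mul_numDerangements (m : ℕ) : (m + 2).factorial ≤ 3 * numDerangements (m + 2) := by
  induction m using Nat.strong_induction_on with
  | _ m ih =>
    match m with
    | 0 => decide
    | 1 => decide
    | k + 2 =>
      have h1 := ih k (by omega)
      have h2 := ih (k + 1) (by omega)
      rw [numDerangements_add_two (k + 2)]
      have e : (k + 2 + 2).factorial = (k + 2 + 1) * ((k + 2).factorial + (k + 1 + 2).factorial) := by
        simp only [Nat.factorial_succ]
        ring
      rw [e]
      have : k + 2 + 1 = k + 1 + 2 := by ring
      rw [show k + 2 + 1 = k + 1 + 2 from by ring]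
      calc (k + 1 + 2) * ((k + 2).factorial + (k + 1 + 2).factorial)
          ≤ (k + 1 + 2) * (3 * numDerangements (k + 2) + 3 * numDerangements (k + 1 + 2)) := by
            gcongr
        _ = _ := by ring

theorem structure_small {n t q : ℕ} (𝒮 : Finset (Finset (Fin n × Fin n)))
    (hq : ∀ B ∈ 𝒮, B.card ≤ q) (hcross : ∀ B ∈ 𝒮, ∀ B' ∈ 𝒮, t ≤ (B ∩ B').card)
    (B₀ : Finset (Fin n × Fin n)) (hB₀ : B₀ ∈ 𝒮)
    (hno : ¬ ∃ T ⊆ B₀, T.card = t ∧ ∀ B ∈ 𝒮, T ⊆ B) :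
    (univ.filter (fun σ : Equiv.Perm (Fin n) => ∃ B ∈ 𝒮, B ⊆ gr σ)).card ≤
      2 ^ q * q * (n - (t + 1)).factorial := by
  classical
  have hch : ∀ T : Finset (Fin n × Fin n), ∃ S ∈ 𝒮, T ⊆ B₀ → T.card = t → ¬ T ⊆ S := by
    intro T
    by_contra hcon
    push Not at hcon
    obtain ⟨h1, h2, _⟩ := hcon B₀ hB₀
    exact hno ⟨T, h1, h2, fun B hB => (hcon B hB).2.2⟩
  choose S hS hS' using hch
  have hsub : univ.filter (fun σ : Equiv.Perm (Fin n) => ∃ B ∈ 𝒮, B ⊆ gr σ) ⊆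
      (powersetCard t B₀).biUnion (fun T => (S T \ T).biUnion (fun x =>
        univ.filter (fun σ : Equiv.Perm (Fin n) => insert x T ⊆ gr σ))) := by
    intro σ hσ
    rw [mem_filter] at hσ
    obtain ⟨_, B, hB, hBσ⟩ := hσ
    obtain ⟨T, hT, hTc⟩ := exists_subset_card_eq (hcross B hB B₀ hB₀)
    have hTB : T ⊆ B := hT.trans inter_subset_left
    have hTB₀ : T ⊆ B₀ := hT.trans inter_subset_right
    have hTS := hS' T hTB₀ hTc
    rw [mem_biUnion]
    refine ⟨T, mem_powersetCard.2 ⟨hTB₀, hTc⟩, ?_⟩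
    have hx : ∃ x ∈ B ∩ S T, x ∉ T := by
      by_contra hcon
      push Not at hcon
      have hsub : B ∩ S T ⊆ T := hcon
      have := Finset.eq_of_subset_of_card_le hsub (by
        rw [hTc]; exact hcross B hB _ (hS T))
      apply hTS
      intro x hx
      rw [← this] at hx
      exact (mem_inter.1 hx).2
    obtain ⟨x, hx, hxT⟩ := hx
    rw [mem_inter] at hx
    rw [mem_biUnion]
    refine ⟨x, mem_sdiff.2 ⟨hx.2, hxT⟩, mem_filter.2 ⟨mem_univ _, ?_⟩⟩
    exact insert_subset (hBσ hx.1) (hTB.trans hBσ)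
  refine (card_le_card hsub).trans ?_
  calc _ ≤ (powersetCard t B₀).card * (q * (n - (t + 1)).factorial) := by
        apply card_biUnion_le_card_mul
        intro T hT
        rw [mem_powersetCard] at hT
        refine (card_biUnion_le_card_mul _ _ ((n - (t + 1)).factorial) ?_).trans ?_
        · intro x hx
          refine (card_star_le _).trans ?_
          rw [card_insert_of_notMem (mem_sdiff.1 hx).2, hT.2]
        · gcongr
          exact (card_le_card sdiff_subset).trans (hq _ (hS T))
    _ ≤ _ := by
        rw [mul_assoc]
        gcongr
        calc _ ≤ B₀.powerset.card := card_le_card (fun x hx => by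
              rw [mem_powersetCard] at hx; exact mem_powerset.2 hx.1)
          _ = 2 ^ B₀.card := card_powerset _
          _ ≤ _ := Nat.pow_le_pow_right (by norm_num) (hq _ hB₀)

theorem near_star {n t : ℕ} (hn : t + 2 ≤ n) (T : Finset (Fin n × Fin n)) (hT : T.card = t)
    (σ₀ σ : Equiv.Perm (Fin n)) (h₀ : T ⊆ gr σ₀) (h : ¬ T ⊆ gr σ)
    (H : Finset (Equiv.Perm (Fin n))) (hH : ∀ π ∈ H, T ⊆ gr π ∧ t ≤ agreements π σ) :
    3 * H.card ≤ 2 * (n - t).factorial := by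
  classical
  obtain ⟨hI, hTI⟩ := sub_gr σ₀ T h₀
  set I := T.image Prod.fst with hIdef
  rw [hT] at hI
  -- the extension
  obtain ⟨ρ, hρ⟩ : ∃ ρ : Equiv.Perm (Fin n), ∀ i, (i ∈ I ∨ σ i ∉ I.image σ₀) →
      ρ i = if i ∈ I then σ₀ i else σ i := by
    obtain ⟨g, hg⟩ := Finset.exists_equiv_extend_of_card_eq (α := Fin n) (β := Fin n)
      (t := univ) (by simp) (s := univ.filter (fun i => i ∈ I ∨ σ i ∉ I.image σ₀))
      (f := fun i => if i ∈ I then σ₀ i else σ i) (subset_univ _) (by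
        intro i hi j hj hij
        simp only [coe_filter, mem_univ, true_and, Set.mem_ofPred_eq] at hi hj
        dsimp only at hij
        by_cases h1 : i ∈ I <;> by_cases h2 : j ∈ I
        · rw [if_pos h1, if_pos h2] at hij; exact σ₀.injective hij
        · rw [if_pos h1, if_neg h2] at hij
          rcases hj with hj | hj
          · exact absurd hj h2
          · exact absurd (mem_image.2 ⟨i, h1, hij⟩) hj
        · rw [if_neg h1, if_pos h2] at hij
          rcases hi with hi | hi
          · exact absurd hi h1
          · exact absurd (mem_image.2 ⟨j, h2, hij.symm⟩) hi
        · rw [if_neg h1, if_neg h2] at hij; exact σ.injective hij)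
    refine ⟨g.trans (Equiv.subtypeUnivEquiv (fun x => mem_univ x)), ?_⟩
    intro i hi
    have := hg i (by simpa using hi)
    simpa using this
  have hsub : H ⊆ (univ.filter (fun π : Equiv.Perm (Fin n) => ∀ i ∈ I, π i = ρ i)) \
      (univ.filter (fun π : Equiv.Perm (Fin n) => ∀ i, i ∈ I ↔ π i = ρ i)) := by
    intro π hπ
    obtain ⟨h1, h2⟩ := hH π hπ
    rw [hTI] at h1
    rw [mem_sdiff, mem_filter, mem_filter]
    refine ⟨⟨mem_univ _, fun i hi => ?_⟩, ?_⟩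
    · rw [h1 i hi, hρ i (Or.inl hi), if_pos hi]
    · rintro ⟨_, h3⟩
      obtain ⟨i, hi, hiI⟩ : ∃ i ∈ univ.filter (fun i => π i = σ i), i ∉ I := by
        by_contra hcon
        push Not at hcon
        have he := Finset.eq_of_subset_of_card_le (s := univ.filter (fun i => π i = σ i)) hcon (by
          rw [hI]; exact h2)
        apply h
        rw [hTI]
        intro i hi
        have hi2 := hi
        rw [← he, mem_filter] at hi2
        rw [← hi2.2, h1 i hi]
      rw [mem_filter] at hi
      apply hiI
      rw [h3, hi.2]
      have hni : σ i ∉ I.image σ₀ := by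
        intro hc
        rw [mem_image] at hc
        obtain ⟨j, hj, hj'⟩ := hc
        rw [← h1 j hj, ← hi.2] at hj'
        exact hiI (π.injective hj' ▸ hj)
      rw [hρ i (Or.inr hni), if_neg hiI]
  have hc := card_le_card hsub
  rw [card_sdiff_of_subset, card_fix, card_fix_der, hI] at hc
  · obtain ⟨m, hm⟩ := Nat.exists_eq_add_of_le hn
    have e : n - t = m + 2 := by omega
    rw [e] at hc ⊢
    have := three_mul_numDerangements m
    omega
  · intro π hπ
    rw [mem_filter] at hπ ⊢
    exact ⟨mem_univ _, fun i hi => (hπ.2 i).1 hi⟩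

theorem stability_aux {n t q J : ℕ} (hn : t + 2 ≤ n) (R : ℝ) (hR : 0 < R)
    (hq : 2 * (q : ℝ) ≤ R)
    (h1 : 32 * (1 + 8 / R) ^ n ≤ (2:ℝ) ^ J) (h2 : (1 + 256 / R) ^ J ≤ 2)
    (h3 : (4:ℝ) * (2 ^ q * q * (n - (t + 1)).factorial) ≤ (n - t).factorial)
    (h4 : ∀ b, q < b → b ≤ n → 48 * (R ^ b * (n - b).factorial) ≤ (n - t).factorial)
    (F : Finset (Equiv.Perm (Fin n))) (hF : IsTIntersecting t F) (hnt : ¬ IsTrivial t F) :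
    (F.card : ℝ) ≤ 3 / 4 * (n - t).factorial := by
  classical
  obtain ⟨𝒮, F', hF', hcov, hS, hrem⟩ := spread_approx R hR q F.card F le_rfl
  have hN : (0:ℝ) < (n - t).factorial := by exact_mod_cast Nat.factorial_pos _
  have hF'c : 48 * (F'.card : ℝ) ≤ (n - t).factorial := by
    rcases hrem with h | ⟨B, hB, hpos, hle⟩
    · rw [h]; simp
    · obtain ⟨σ, hσ⟩ := card_pos.1 hpos
      have hBn : B.card ≤ n := by
        exact (card_le_card (mem_filter.1 hσ).2).trans (card_gr σ).le
      have hst : ((F'.filter (fun σ => B ⊆ gr σ)).card : ℝ) ≤ (n - B.card).factorial := by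
        exact_mod_cast (card_le_card (filter_subset_filter _ (subset_univ _))).trans
          (card_star_le B)
      calc 48 * (F'.card : ℝ) ≤ 48 * (R ^ B.card * (n - B.card).factorial) := by
            have : R ^ B.card * ((F'.filter (fun σ => B ⊆ gr σ)).card : ℝ) ≤
              R ^ B.card * (n - B.card).factorial := by gcongr
            linarith
        _ ≤ _ := h4 _ hB hBn
  have hcross : ∀ B ∈ 𝒮, ∀ B' ∈ 𝒮, t ≤ (B ∩ B').card := by
    intro B hB B' hB'
    obtain ⟨a1, G, a2, a3, a4, a5⟩ := hS B hB
    obtain ⟨b1, G', b2, b3, b4, b5⟩ := hS B' hB'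
    exact spread_inter R hR q J hq h1 h2 F hF B B' a1 b1 G G' a2 b2 a3 b3 a5 b5
  have hsplit : (F.card : ℝ) = (F \ F').card + F'.card := by
    exact_mod_cast (card_sdiff_add_card_eq_card hF').symm
  suffices hh : 3 * ((F \ F').card : ℝ) ≤ 2 * (n - t).factorial by linarith
  rcases 𝒮.eq_empty_or_nonempty with h𝒮 | ⟨B₀, hB₀⟩
  · have : F \ F' = ∅ := by
      rw [eq_empty_iff_forall_notMem]
      intro σ hσ
      rw [mem_sdiff] at hσ
      obtain ⟨B, hB, _⟩ := hcov σ hσ.1 hσ.2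
      simp [h𝒮] at hB
    rw [this]; simp
  by_cases hT : ∃ T ⊆ B₀, T.card = t ∧ ∀ B ∈ 𝒮, T ⊆ B
  · obtain ⟨T, hTB, hTc, hTS⟩ := hT
    obtain ⟨_, G, _, ⟨σ₀, hσ₀⟩, a4, _⟩ := hS B₀ hB₀
    have hTσ₀ : T ⊆ gr σ₀ := hTB.trans (a4 _ hσ₀)
    obtain ⟨σ, hσF, hσ⟩ : ∃ σ ∈ F, ¬ T ⊆ gr σ := by
      by_contra hcon
      push Not at hcon
      obtain ⟨hI, hTI⟩ := sub_gr σ₀ T hTσ₀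
      exact hnt ⟨T.image Prod.fst, hI.trans hTc, σ₀, fun π hπ => (hTI π).1 (hcon π hπ)⟩
    have := near_star hn T hTc σ₀ σ hTσ₀ hσ (F \ F') (by
      intro π hπ
      rw [mem_sdiff] at hπ
      obtain ⟨B, hB, hBπ⟩ := hcov π hπ.1 hπ.2
      exact ⟨(hTS B hB).trans hBπ, hF π hπ.1 σ hσF⟩)
    exact_mod_cast this
  · have hs := structure_small 𝒮 (fun B hB => (hS B hB).1) hcross B₀ hB₀ hT
    have hle : (F \ F').card ≤ 2 ^ q * q * (n - (t + 1)).factorial := by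
      refine (card_le_card ?_).trans hs
      intro π hπ
      rw [mem_sdiff] at hπ
      exact mem_filter.2 ⟨mem_univ _, hcov π hπ.1 hπ.2⟩
    have hle' : ((F \ F').card : ℝ) ≤ 2 ^ q * q * (n - (t + 1)).factorial := by
      exact_mod_cast hle
    linarith

lemma pow_mul_factorial_le (n b : ℕ) (hb : b ≤ n) :
    (n : ℝ) ^ b * (n - b).factorial ≤ Real.exp 1 ^ b * n.factorial := by
  induction n generalizing b with
  | zero =>
    have : b = 0 := by omega
    subst this; simp
  | succ n ih =>
    cases b with
    | zero => simp
    | succ b =>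
      have hbn : b ≤ n := by omega
      have h := ih b hbn
      rw [Nat.add_sub_add_right]
      have h2 : ((n : ℝ) + 1) ^ b ≤ Real.exp 1 * (n : ℝ) ^ b := by
        rcases Nat.eq_zero_or_pos n with rfl | hn
        · have : b = 0 := by omega
          subst this
          simp
        · have hn' : (0:ℝ) < n := by exact_mod_cast hn
          have e1 : ((n : ℝ) + 1) = (1 / n + 1) * n := by field_simp; ring
          rw [e1, mul_pow]
          gcongr
          calc (1 / (n:ℝ) + 1) ^ b ≤ (Real.exp (1 / n)) ^ b := by
                gcongr
                exact Real.add_one_le_exp _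
            _ = Real.exp (b * (1 / n)) := by rw [Real.exp_nat_mul]
            _ ≤ _ := by
                apply Real.exp_le_exp.2
                rw [mul_one_div, div_le_one hn']
                exact_mod_cast hbn
      push_cast [Nat.factorial_succ]
      calc ((n:ℝ) + 1) ^ (b + 1) * ((n - b).factorial : ℝ)
          = (n + 1) * (((n:ℝ) + 1) ^ b * ((n - b).factorial : ℝ)) := by ring
        _ ≤ (n + 1) * ((Real.exp 1 * (n : ℝ) ^ b) * ((n - b).factorial : ℝ)) := by gcongr
        _ = (n + 1) * Real.exp 1 * ((n : ℝ) ^ b * ((n - b).factorial : ℝ)) := by ring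
        _ ≤ (n + 1) * Real.exp 1 * (Real.exp 1 ^ b * n.factorial) := by gcongr
        _ = _ := by ring

lemma one_add_pow_le_exp (x : ℝ) (hx : 0 ≤ x) (k : ℕ) : (1 + x) ^ k ≤ Real.exp (k * x) := by
  rw [Real.exp_nat_mul]
  gcongr
  rw [add_comm]
  exact Real.add_one_le_exp _

theorem stability (t : ℕ) : ∃ n₀ : ℕ, ∀ n : ℕ, n₀ ≤ n →
    ∀ F : Finset (Equiv.Perm (Fin n)), IsTIntersecting t F → ¬ IsTrivial t F →
      (F.card : ℝ) ≤ 3 / 4 * (n - t).factorial := by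
  have hx : Filter.Tendsto (fun n : ℕ => (n : ℝ) ^ ((1:ℝ) / 4)) Filter.atTop Filter.atTop :=
    (tendsto_rpow_atTop (by norm_num)).comp tendsto_natCast_atTop_atTop
  have hev := hx.eventually_ge_atTop (200 + 8 * t + 48 * Real.exp 1 ^ (4 * t + 1))
  obtain ⟨n₁, hn₁⟩ := Filter.eventually_atTop.1 hev
  refine ⟨max n₁ (t + 2 + 4 * (2 ^ (4 * t) * (4 * t))), fun n hn F hF hnt => ?_⟩
  have hxn := hn₁ n ((le_max_left _ _).trans hn)
  have hn2 := (le_max_right _ _).trans hn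
  set x : ℝ := (n : ℝ) ^ ((1:ℝ) / 4) with hxdef
  have he1 : (1:ℝ) ≤ Real.exp 1 := Real.one_le_exp (by norm_num)
  have hep : (1:ℝ) ≤ Real.exp 1 ^ (4 * t + 1) := one_le_pow₀ he1
  have ht0 : (0:ℝ) ≤ t := by positivity
  have hx200 : 200 ≤ x := by linarith
  have hx0 : 0 < x := by linarith
  have hx4 : x ^ 4 = n := by
    rw [hxdef, ← Real.rpow_natCast, ← Real.rpow_mul (by positivity)]
    norm_num
  have hR : 0 < x ^ 3 := by positivity
  have hn0 : (0:ℝ) < n := by rw [← hx4]; positivity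
  apply stability_aux (q := 4 * t) (J := 16 * ⌈x⌉₊ + 5) (by omega) (x ^ 3) hR ?_ ?_ ?_ ?_ ?_ F hF hnt
  · push_cast
    have : x ≤ x ^ 3 := le_self_pow₀ (by linarith) (by norm_num)
    linarith
  · have e1 : (1 + 8 / x ^ 3) ^ n ≤ Real.exp (n * (8 / x ^ 3)) :=
      one_add_pow_le_exp _ (by positivity) _
    have e2 : (n:ℝ) * (8 / x ^ 3) = 8 * x := by
      rw [← hx4]; field_simp
    rw [e2] at e1
    have e3 : Real.exp (8 * x) ≤ (2:ℝ) ^ (16 * ⌈x⌉₊) := by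
      calc Real.exp (8 * x) ≤ Real.exp ((8 * ⌈x⌉₊ : ℕ) * 1) := by
            apply Real.exp_le_exp.2
            push_cast
            have := Nat.le_ceil x
            linarith
        _ = Real.exp 1 ^ (8 * ⌈x⌉₊) := by rw [Real.exp_nat_mul]
        _ ≤ 4 ^ (8 * ⌈x⌉₊) := by
            gcongr
            have := Real.exp_one_lt_d9
            linarith
        _ = _ := by
            rw [show (4:ℝ) = 2 ^ 2 by norm_num, ← pow_mul]
            congr 1; ring
    rw [pow_add]
    linarith
  · refine (one_add_pow_le_exp _ (by positivity) _).trans ?_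
    have hJ : ((16 * ⌈x⌉₊ + 5 : ℕ) : ℝ) ≤ 37 * x := by
      push_cast
      have := (Nat.ceil_lt_add_one hx0.le).le
      linarith
    have e1 : ((16 * ⌈x⌉₊ + 5 : ℕ) : ℝ) * (256 / x ^ 3) ≤ 1 / 2 := by
      calc ((16 * ⌈x⌉₊ + 5 : ℕ) : ℝ) * (256 / x ^ 3) ≤ 37 * x * (256 / x ^ 3) := by gcongr
        _ = 9472 / x ^ 2 := by field_simp; norm_num
        _ ≤ _ := by
          rw [div_le_div_iff₀ (by positivity) (by norm_num)]
          nlinarith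
    calc _ ≤ Real.exp (1 / 2) := Real.exp_le_exp.2 e1
      _ ≤ 2 := by
        have h := Real.exp_one_lt_d9
        have h2 : Real.exp (1/2) * Real.exp (1/2) = Real.exp 1 := by
          rw [← Real.exp_add]; norm_num
        nlinarith [Real.exp_pos (1/2)]
  · have hk : 4 * (2 ^ (4 * t) * (4 * t)) ≤ n - t := by omega
    obtain ⟨m, hm⟩ : ∃ m, n - t = m + 1 := ⟨n - t - 1, by omega⟩
    have hm' : n - (t + 1) = m := by omega
    rw [hm', hm]
    rw [hm] at hk
    rw [Nat.factorial_succ]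
    have : 4 * (2 ^ (4 * t) * (4 * t) * m.factorial) ≤ (m + 1) * m.factorial := by
      calc _ = 4 * (2 ^ (4 * t) * (4 * t)) * m.factorial := by ring
        _ ≤ _ := by gcongr
    exact_mod_cast this
  · intro b hb hbn
    have e1 := pow_mul_factorial_le n b hbn
    rw [← hx4] at e1
    -- (x^3)^b (n-b)! ≤ (e/x)^b n!
    have e2 : x ^ b * ((x ^ 3) ^ b * (n - b).factorial) ≤ Real.exp 1 ^ b * n.factorial := by
      calc x ^ b * ((x ^ 3) ^ b * (n - b).factorial) = (x ^ 4) ^ b * (n - b).factorial := by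
            rw [← mul_assoc, ← mul_pow]; ring
        _ ≤ _ := e1
    obtain ⟨c, rfl⟩ : ∃ c, b = 4 * t + 1 + c := ⟨b - (4 * t + 1), by omega⟩
    have e3 : (n.factorial : ℝ) ≤ x ^ (4 * t) * (n - t).factorial := by
      rw [pow_mul, hx4]
      have h5 : n.factorial = (n - t).factorial * n.descFactorial t :=
        (Nat.factorial_mul_descFactorial (by omega)).symm
      have h6 := Nat.descFactorial_le_pow n t
      have : n.factorial ≤ n ^ t * (n - t).factorial := by
        rw [h5, mul_comm]; gcongr
      exact_mod_cast this
    have hN : (0:ℝ) < (n - t).factorial := by exact_mod_cast Nat.factorial_pos _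
    have hxe : Real.exp 1 ≤ x := by
      have := Real.exp_one_lt_d9
      linarith
    have hc : Real.exp 1 ^ c ≤ x ^ c := by gcongr
    set Z : ℝ := (x ^ 3) ^ (4 * t + 1 + c) * (n - (4 * t + 1 + c)).factorial with hZ
    have hbig : x ^ (4 * t + 1 + c) * (48 * Z) ≤ x ^ (4 * t + 1 + c) * (n - t).factorial := by
      calc x ^ (4 * t + 1 + c) * (48 * Z) = 48 * (x ^ (4 * t + 1 + c) * Z) := by ring
        _ ≤ 48 * (Real.exp 1 ^ (4 * t + 1 + c) * n.factorial) := by linarith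
        _ ≤ 48 * (Real.exp 1 ^ (4 * t + 1 + c) * (x ^ (4 * t) * (n - t).factorial)) := by gcongr
        _ = (48 * Real.exp 1 ^ (4 * t + 1)) * Real.exp 1 ^ c * (x ^ (4 * t) * (n - t).factorial) := by
            rw [pow_add _ (4 * t + 1) c]; ring
        _ ≤ x * x ^ c * (x ^ (4 * t) * (n - t).factorial) := by
            gcongr
            linarith
        _ = _ := by ring
    exact le_of_mul_le_mul_left hbig (by positivity)

end Stability


section Fingerprint
open Finset

/-- The permutations agreeing in at least `t` places with all members of `T`. -/
def agC {n : ℕ} (t : ℕ) (T : Finset (Equiv.Perm (Fin n))) : Finset (Equiv.Perm (Fin n)) :=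
  univ.filter (fun π => ∀ σ ∈ T, t ≤ agreements σ π)

lemma mem_agC {n t : ℕ} (T : Finset (Equiv.Perm (Fin n))) (π : Equiv.Perm (Fin n)) :
    π ∈ agC t T ↔ ∀ σ ∈ T, t ≤ agreements σ π := by simp [agC]

lemma agreements_comm {n : ℕ} (σ π : Equiv.Perm (Fin n)) :
    agreements σ π = agreements π σ := by
  rw [← card_gr_inter, ← card_gr_inter, inter_comm]

theorem card_bollobas {n t : ℕ} (T : Finset (Equiv.Perm (Fin n)))
    (f : Equiv.Perm (Fin n) → Equiv.Perm (Fin n))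
    (h1 : ∀ σ ∈ T, agreements σ (f σ) < t)
    (h2 : ∀ σ ∈ T, ∀ τ ∈ T, σ ≠ τ → t ≤ agreements σ (f τ)) : T.card ≤ 2 ^ n := by
  classical
  set S : Equiv.Perm (Fin n) → Finset (Fin n) := fun σ => univ.filter (fun i => σ i ≠ f σ i)
    with hS
  set C : Matrix T (Finset (Fin n)) ℚ := Matrix.of fun σ A =>
    if A ⊆ S σ then ∏ k ∈ S σ \ A, (-((σ.1 k : ℕ) : ℚ)) else 0 with hC
  set D : Matrix (Finset (Fin n)) T ℚ := Matrix.of fun A τ => ∏ k ∈ A, ((f τ.1 k : ℕ) : ℚ) with hD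
  have hprod : ∀ σ τ : T, (C * D) σ τ = ∏ k ∈ S σ, (((f τ.1 k : ℕ) : ℚ) + -((σ.1 k : ℕ) : ℚ)) := by
    intro σ τ
    rw [Matrix.mul_apply, Finset.prod_add]
    simp only [hC, hD, Matrix.of_apply, ite_mul, zero_mul]
    rw [← sum_filter]
    apply sum_congr
    · ext A; simp
    · intro A _; ring
  have hdiag : C * D = Matrix.diagonal (fun σ : T => (C * D) σ σ) := by
    ext σ τ
    by_cases hst : σ = τ
    · subst hst; simp
    · rw [Matrix.diagonal_apply_ne _ hst, hprod]
      have hne : σ.1 ≠ τ.1 := fun h => hst (Subtype.ext h)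
      have ha := h2 σ.1 σ.2 τ.1 τ.2 hne
      have hb := h1 σ.1 σ.2
      have : ∃ k ∈ univ.filter (fun i => σ.1 i = f τ.1 i), k ∉ univ.filter (fun i => σ.1 i = f σ.1 i) := by
        by_contra hcon
        push Not at hcon
        have := card_le_card (s := univ.filter (fun i => σ.1 i = f τ.1 i)) hcon
        unfold agreements at ha hb
        omega
      obtain ⟨k, hk1, hk2⟩ := this
      simp only [mem_filter, mem_univ, true_and] at hk1 hk2
      apply prod_eq_zero (i := k)
      · simp [hS, hk2]
      · rw [hk1]; ring
  have hnz : ∀ σ : T, (C * D) σ σ ≠ 0 := by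
    intro σ
    rw [hprod, prod_ne_zero_iff]
    intro k hk
    simp only [hS, mem_filter, mem_univ, true_and] at hk
    intro h0
    apply hk
    have : ((f σ.1 k : ℕ) : ℚ) = ((σ.1 k : ℕ) : ℚ) := by linarith
    exact Fin.ext (by exact_mod_cast this.symm)
  have hr1 : (C * D).rank = T.card := by
    rw [hdiag, Matrix.rank_diagonal]
    have : Fintype.card {i : T // (C * D) i i ≠ 0} = Fintype.card T :=
      Fintype.card_congr (Equiv.subtypeUnivEquiv hnz)
    rw [this]; simp
  have hr2 : (C * D).rank ≤ 2 ^ n := by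
    refine (Matrix.rank_mul_le_left C D).trans ?_
    refine (Matrix.rank_le_card_width C).trans ?_
    simp
  omega

theorem fingerprint {n t : ℕ} (F : Finset (Equiv.Perm (Fin n))) :
    ∃ T : Finset (Equiv.Perm (Fin n)), T.card ≤ 2 ^ n ∧ agC t T = agC t F := by
  classical
  obtain ⟨T, hT, hmin⟩ := Finset.exists_min_image
    (univ.filter (fun T : Finset (Equiv.Perm (Fin n)) => agC t T = agC t F))
    (fun T => T.card) ⟨F, by simp⟩
  rw [mem_filter] at hT
  refine ⟨T, ?_, hT.2⟩
  have hex : ∀ σ, ∃ π, σ ∈ T → (agreements σ π < t ∧ ∀ τ ∈ T, τ ≠ σ → t ≤ agreements τ π) := by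
    intro σ
    by_cases hσ : σ ∈ T
    · have hne : agC t (T.erase σ) ≠ agC t F := by
        intro h
        have := hmin (T.erase σ) (mem_filter.2 ⟨mem_univ _, h⟩)
        have h3 := card_erase_lt_of_mem hσ
        omega
      rw [← hT.2] at hne
      have : ∃ π ∈ agC t (T.erase σ), π ∉ agC t T := by
        by_contra hcon
        push Not at hcon
        apply hne
        apply Subset.antisymm hcon
        intro π hπ
        rw [mem_agC] at hπ ⊢
        exact fun τ hτ => hπ τ (mem_of_mem_erase hτ)
      obtain ⟨π, h1, h2⟩ := this
      rw [mem_agC] at h1 h2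
      have h3 : ∀ τ ∈ T, τ ≠ σ → t ≤ agreements τ π :=
        fun τ hτ hne => h1 τ (mem_erase.2 ⟨hne, hτ⟩)
      refine ⟨π, fun _ => ⟨?_, h3⟩⟩
      by_contra hcon
      apply h2
      intro τ hτ
      by_cases h : τ = σ
      · subst h; omega
      · exact h3 τ hτ h
    · exact ⟨1, fun h => absurd h hσ⟩
  choose f hf using hex
  exact card_bollobas T f (fun σ hσ => (hf σ hσ).1)
    (fun σ hσ τ hτ hne => (hf τ hτ).2 σ hσ hne)

theorem exists_maximal {n t : ℕ} (htn : t ≤ n) (F : Finset (Equiv.Perm (Fin n)))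
    (hF : IsTIntersecting t F) :
    ∃ F' : Finset (Equiv.Perm (Fin n)), F ⊆ F' ∧ IsTIntersecting t F' ∧ agC t F' = F' := by
  classical
  obtain ⟨M, hM, hmax⟩ := Finset.exists_max_image
    (univ.filter (fun M : Finset (Equiv.Perm (Fin n)) => F ⊆ M ∧ IsTIntersecting t M))
    (fun M => M.card) ⟨F, by simp [hF]⟩
  simp only [mem_filter, mem_univ, true_and] at hM hmax
  refine ⟨M, hM.1, hM.2, Subset.antisymm ?_ ?_⟩
  · intro π hπ
    rw [mem_agC] at hπ
    by_contra hcon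
    have := hmax (insert π M) ⟨hM.1.trans (subset_insert _ _), by
      intro σ hσ τ hτ
      rw [mem_insert] at hσ hτ
      rcases hσ with rfl | hσ <;> rcases hτ with rfl | hτ
      · rw [← card_gr_inter, inter_self, card_gr]; exact htn
      · rw [agreements_comm]; exact hπ _ hτ
      · exact hπ _ hσ
      · exact hM.2 _ hσ _ hτ⟩
    rw [card_insert_of_notMem hcon] at this
    omega
  · intro π hπ
    rw [mem_agC]
    exact fun σ hσ => hM.2 σ hσ π hπ

lemma card_small_subsets {α : Type*} [Fintype α] [DecidableEq α] (k : ℕ) :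
    (univ.filter (fun T : Finset α => T.card ≤ k)).card ≤ (Fintype.card α + 1) ^ k := by
  have h : (univ.filter (fun T : Finset α => T.card ≤ k)) ⊆
      (univ : Finset (Fin k → Option α)).image (fun f => eraseNone (univ.image f)) := by
    intro T hT
    rw [mem_filter] at hT
    rw [mem_image]
    refine ⟨fun i => if h : i.1 < T.card then some (T.equivFin.symm ⟨i.1, h⟩).1 else none,
      mem_univ _, ?_⟩
    ext x
    rw [mem_eraseNone, mem_image]
    constructor
    · rintro ⟨i, _, hi⟩
      split_ifs at hi with h
      rw [Option.some.injEq] at hi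
      rw [← hi]
      exact (T.equivFin.symm ⟨i.1, h⟩).2
    · intro hx
      refine ⟨⟨(T.equivFin ⟨x, hx⟩).1, lt_of_lt_of_le (T.equivFin ⟨x, hx⟩).2 hT.2⟩, mem_univ _, ?_⟩
      simp
  refine (card_le_card h).trans (card_image_le.trans ?_)
  simp

end Fingerprint

section Prob
open Finset

/-- The weight of a set in the `p`-random model. -/
noncomputable def wt {α : Type*} [Fintype α] (p : ℝ) (W : Finset α) : ℝ :=
  p ^ W.card * (1 - p) ^ (Fintype.card α - W.card)

lemma wt_nonneg {α : Type*} [Fintype α] (p : ℝ) (hp : 0 ≤ p) (hp1 : p ≤ 1) (W : Finset α) :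
    0 ≤ wt p W := by
  have : 0 ≤ 1 - p := by linarith
  unfold wt; positivity

lemma wt_mgf {α : Type*} [Fintype α] [DecidableEq α] (p z : ℝ) (A : Finset α) :
    ∑ W : Finset α, wt p W * z ^ (W ∩ A).card = (1 - p + p * z) ^ A.card := by
  have h := Finset.prod_add (fun i : α => if i ∈ A then p * z else p) (fun _ => 1 - p) univ
  have e1 : ∏ i : α, ((if i ∈ A then p * z else p) + (1 - p)) = (1 - p + p * z) ^ A.card := by
    have : ∀ i : α, ((if i ∈ A then p * z else p) + (1 - p)) =
        if i ∈ A then (1 - p + p * z) else 1 := by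
      intro i; split_ifs <;> ring
    simp only [this]
    rw [prod_ite_mem]; simp
  rw [e1, powerset_univ] at h
  rw [h]
  apply sum_congr rfl
  intro W _
  have e2 : ∏ i ∈ W, (if i ∈ A then p * z else p) = p ^ W.card * z ^ (W ∩ A).card := by
    have : ∀ i : α, (if i ∈ A then p * z else p) = p * (if i ∈ A then z else 1) := by
      intro i; split_ifs <;> ring
    simp only [this]
    rw [prod_mul_distrib, prod_const, prod_ite_mem, prod_const]
  rw [e2, prod_const, card_univ_sdiff]
  unfold wt
  ring

lemma wt_total {α : Type*} [Fintype α] [DecidableEq α] (p : ℝ) :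
    ∑ W : Finset α, wt p W = 1 := by
  have := wt_mgf p 1 (∅ : Finset α)
  simpa using this

lemma wt_tail {α : Type*} [Fintype α] [DecidableEq α] (p l m : ℝ) (hp : 0 ≤ p) (hp1 : p ≤ 1)
    (A : Finset α) :
    ∑ W ∈ univ.filter (fun W : Finset α => l * m ≤ l * ((W ∩ A).card : ℝ)), wt p W ≤
      Real.exp (p * A.card * (Real.exp l - 1) - l * m) := by
  calc ∑ W ∈ univ.filter (fun W : Finset α => l * m ≤ l * ((W ∩ A).card : ℝ)), wt p W
      ≤ ∑ W ∈ univ.filter (fun W : Finset α => l * m ≤ l * ((W ∩ A).card : ℝ)),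
        wt p W * Real.exp l ^ (W ∩ A).card * Real.exp (- (l * m)) := by
        apply sum_le_sum
        intro W hW
        rw [mem_filter] at hW
        rw [mul_assoc]
        apply le_mul_of_one_le_right (wt_nonneg p hp hp1 W)
        rw [← Real.exp_nat_mul, ← Real.exp_add]
        apply Real.one_le_exp
        linarith
    _ ≤ ∑ W : Finset α, wt p W * Real.exp l ^ (W ∩ A).card * Real.exp (- (l * m)) := by
        apply sum_le_sum_of_subset_of_nonneg (subset_univ _)
        intro W _ _
        have := wt_nonneg p hp hp1 W
        positivity
    _ = (1 - p + p * Real.exp l) ^ A.card * Real.exp (- (l * m)) := by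
        rw [← sum_mul, wt_mgf]
    _ ≤ Real.exp (A.card * (p * (Real.exp l - 1))) * Real.exp (- (l * m)) := by
        gcongr
        rw [Real.exp_nat_mul]
        have h0 : 0 ≤ p * Real.exp l := by positivity
        apply pow_le_pow_left₀ (by linarith)
        have := Real.add_one_le_exp (p * (Real.exp l - 1))
        linarith
    _ = _ := by
        rw [← Real.exp_add]
        congr 1; ring

lemma randomSubsetProb_ge {α : Type*} [Fintype α] [DecidableEq α] (p : ℝ) (hp : 0 ≤ p) (hp1 : p ≤ 1)
    (P : Finset α → Prop) (Bad : Finset (Finset α)) (h : ∀ W, ¬ P W → W ∈ Bad) :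
    1 - ∑ W ∈ Bad, wt p W ≤ randomSubsetProb (univ : Finset α) p P := by
  classical
  unfold randomSubsetProb
  rw [powerset_univ]
  have htot := wt_total (α := α) p
  rw [← sum_sdiff (subset_univ Bad)] at htot
  have hre : 1 - ∑ W ∈ Bad, wt p W = ∑ W ∈ univ \ Bad, wt p W := by linarith
  rw [hre]
  have e : ∀ W : Finset α, (0:ℝ) ≤ if P W then p ^ W.card * (1 - p) ^ ((univ : Finset α).card - W.card) else 0 := by
    intro W
    have := wt_nonneg p hp hp1 W
    unfold wt at this
    rw [card_univ]
    split_ifs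
    · exact this
    · exact le_rfl
  calc ∑ W ∈ univ \ Bad, wt p W
      ≤ ∑ W ∈ univ \ Bad, (if P W then p ^ W.card * (1 - p) ^ ((univ : Finset α).card - W.card) else 0) := by
        apply sum_le_sum
        intro W hW
        rw [mem_sdiff] at hW
        have : P W := by
          by_contra hcon
          exact hW.2 (h W hcon)
        rw [if_pos this, card_univ]
        exact le_rfl
    _ ≤ _ := by
        refine (sum_le_sum_of_subset_of_nonneg (subset_univ _) (fun W _ _ => e W)).trans (le_of_eq ?_)
        apply sum_congr rfl
        intro W _
        congr

end Prob


section Final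
open Finset

lemma tail_arith_up (x : ℝ) (M K : ℝ) (hM : M ≤ 3 / 4 * K) (hx : 0 ≤ x) (hK : 0 ≤ K) :
    x * M * (Real.exp (1/10) - 1) - (1/10) * (7 / 8 * (x * K)) ≤ - (x * K / 400) := by
  have h := Real.abs_exp_sub_one_sub_id_le (x := (1/10 : ℝ)) (by norm_num [abs_of_pos])
  have h2 := (abs_le.1 h).2
  have h3 : Real.exp (1/10) - 1 ≤ 11/100 := by linarith
  have h4 : 0 ≤ Real.exp (1/10) - 1 := by
    have := Real.add_one_le_exp (1/10 : ℝ)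
    linarith
  have h5 : x * M ≤ 3 / 4 * (x * K) := by nlinarith
  have hxK : 0 ≤ x * K := mul_nonneg hx hK
  have : x * M * (Real.exp (1/10) - 1) ≤ 3 / 4 * (x * K) * (11/100) :=
    (mul_le_mul_of_nonneg_right h5 h4).trans (mul_le_mul_of_nonneg_left h3 (by positivity))
  linarith

lemma tail_arith_lo (y : ℝ) (hy : 0 ≤ y) :
    y * (Real.exp (-1/10) - 1) - (-1/10) * (7 / 8 * y) ≤ - (y / 400) := by
  have h := Real.abs_exp_sub_one_sub_id_le (x := (-1/10 : ℝ)) (by norm_num [abs_le])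
  have h2 := (abs_le.1 h).2
  have h3 : Real.exp (-1/10) - 1 ≤ -9/100 := by linarith
  have := mul_le_mul_of_nonneg_left h3 hy
  linarith

theorem bad_event {n t : ℕ} (htn : t ≤ n)
    (hst : ∀ F : Finset (Equiv.Perm (Fin n)), IsTIntersecting t F → ¬ IsTrivial t F →
      (F.card : ℝ) ≤ 3 / 4 * (n - t).factorial)
    (p : ℝ) (hp : 0 ≤ p) (hp1 : p ≤ 1) :
    1 - (1 + ((n.factorial : ℝ) + 1) ^ (2 ^ n)) * Real.exp (-(p * (n - t).factorial / 400)) ≤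
      randomSubsetProb (Finset.univ : Finset (Equiv.Perm (Fin n))) p
        (fun W => ∀ F ⊆ W, IsTIntersecting t F →
          (∀ G ⊆ W, IsTIntersecting t G → G.card ≤ F.card) → IsTrivial t F) := by
  classical
  obtain ⟨I, -, hI⟩ := exists_subset_card_eq (s := (univ : Finset (Fin n))) (n := t) (by simpa using htn)
  set N : ℝ := ((n - t).factorial : ℝ) with hN
  set A : Finset (Equiv.Perm (Fin n)) :=
    univ.filter (fun π => ∀ i ∈ I, π i = (1 : Equiv.Perm (Fin n)) i) with hA
  have hAc : (A.card : ℝ) = N := by rw [hA, card_fix, hI]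
  have hN0 : 0 ≤ N := by positivity
  let m : ℝ := 7 / 8 * (p * N)
  let E0 : Finset (Finset (Equiv.Perm (Fin n))) :=
    univ.filter (fun W => (-1/10) * m ≤ (-1/10) * ((W ∩ A).card : ℝ))
  let ET : Finset (Equiv.Perm (Fin n)) → Finset (Finset (Equiv.Perm (Fin n))) := fun T =>
    univ.filter (fun W => (1/10) * m ≤ (1/10) * ((W ∩ agC t T).card : ℝ))
  let Ts : Finset (Finset (Equiv.Perm (Fin n))) :=
    (univ.filter (fun T => T.card ≤ 2 ^ n)).filter (fun T => ((agC t T).card : ℝ) ≤ 3 / 4 * N)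
  have hw : ∀ W : Finset (Equiv.Perm (Fin n)), 0 ≤ wt p W := wt_nonneg p hp hp1
  have key := randomSubsetProb_ge p hp hp1 (fun W => ∀ F ⊆ W, IsTIntersecting t F →
          (∀ G ⊆ W, IsTIntersecting t G → G.card ≤ F.card) → IsTrivial t F)
          (E0 ∪ Ts.biUnion ET) ?_
  · refine le_trans ?_ key
    have h0 : ∑ W ∈ E0, wt p W ≤ Real.exp (-(p * N / 400)) := by
      refine (wt_tail p (-1/10) m hp hp1 A).trans ?_
      rw [hAc]
      exact Real.exp_le_exp.2 (tail_arith_lo (p * N) (by positivity))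
    have h1 : ∀ T ∈ Ts, ∑ W ∈ ET T, wt p W ≤ Real.exp (-(p * N / 400)) := by
      intro T hT
      refine (wt_tail p (1/10) m hp hp1 (agC t T)).trans ?_
      exact Real.exp_le_exp.2 (tail_arith_up p _ N (mem_filter.1 hT).2 hp hN0)
    have hcard : (Ts.card : ℝ) ≤ ((n.factorial : ℝ) + 1) ^ (2 ^ n) := by
      have h := (card_filter_le (univ.filter (fun T : Finset (Equiv.Perm (Fin n)) => T.card ≤ 2 ^ n))
        (fun T => ((agC t T).card : ℝ) ≤ 3 / 4 * N)).trans
        (card_small_subsets (α := Equiv.Perm (Fin n)) (2 ^ n))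
      rw [Fintype.card_perm, Fintype.card_fin] at h
      exact_mod_cast h
    have h2 : ∑ W ∈ Ts.biUnion ET, wt p W ≤ ∑ T ∈ Ts, ∑ W ∈ ET T, wt p W := by
      clear_value ET
      clear key h1 hcard
      induction Ts using Finset.induction_on with
      | empty => simp
      | insert a s ha ih =>
        rw [biUnion_insert, sum_insert ha]
        have := sum_union_inter (s₁ := ET a) (s₂ := s.biUnion ET) (f := wt p)
        have h3 : 0 ≤ ∑ W ∈ ET a ∩ s.biUnion ET, wt p W := sum_nonneg (fun W _ => hw W)
        linarith
    have h3 : ∑ T ∈ Ts, ∑ W ∈ ET T, wt p W ≤ Ts.card * Real.exp (-(p * N / 400)) := by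
      have := sum_le_card_nsmul Ts _ _ h1
      rwa [nsmul_eq_mul] at this
    have h4 := sum_union_inter (s₁ := E0) (s₂ := Ts.biUnion ET) (f := wt p)
    have h5 : 0 ≤ ∑ W ∈ E0 ∩ Ts.biUnion ET, wt p W := sum_nonneg (fun W _ => hw W)
    have h6 := mul_le_mul_of_nonneg_right hcard (Real.exp_pos (-(p * N / 400))).le
    linarith
  · intro W hW
    push Not at hW
    obtain ⟨F, hFW, hF, hmax, hnt⟩ := hW
    by_contra hbad
    rw [mem_union, not_or] at hbad
    obtain ⟨hb0, hbT⟩ := hbad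
    have hA1 : IsTIntersecting t (W ∩ A) := by
      intro σ hσ π hπ
      have h1 := (mem_filter.1 (mem_inter.1 hσ).2).2
      have h2 := (mem_filter.1 (mem_inter.1 hπ).2).2
      rw [← hI]
      apply card_le_card
      intro i hi
      rw [mem_filter]
      exact ⟨mem_univ _, by rw [h1 i hi, h2 i hi]⟩
    have hle := hmax _ inter_subset_left hA1
    have hm : m < ((W ∩ A).card : ℝ) := by
      by_contra hc
      push Not at hc
      apply hb0
      simp only [E0, mem_filter, mem_univ, true_and]
      linarith
    obtain ⟨F', hFF', hF', hag⟩ := exists_maximal htn F hF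
    have hnt' : ¬ IsTrivial t F' := by
      rintro ⟨J, hJ, x, hx⟩
      exact hnt ⟨J, hJ, x, fun σ hσ => hx σ (hFF' hσ)⟩
    obtain ⟨T, hT, hTa⟩ := fingerprint (t := t) F'
    rw [hag] at hTa
    apply hbT
    rw [mem_biUnion]
    refine ⟨T, ?_, ?_⟩
    · simp only [Ts, mem_filter, mem_univ, true_and]
      exact ⟨hT, by rw [hTa]; exact hst F' hF' hnt'⟩
    · simp only [ET, mem_filter, mem_univ, true_and]
      rw [hTa]
      have h1 : F.card ≤ (W ∩ F').card := card_le_card (subset_inter hFW hFF')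
      have h2 : ((W ∩ A).card : ℝ) ≤ (W ∩ F').card := by exact_mod_cast hle.trans h1
      linarith

lemma final_arith (n t : ℕ) (hn : 3 ≤ n) (hnt : 2 * t ≤ n) (p : ℝ)
    (hp : 800 * (n : ℝ) * (2 : ℝ) ^ (2 * n - 2 * t) * Real.logb 2 n /
          ((n - t).factorial : ℝ) ≤ p) :
    0 ≤ p ∧ (1 + ((n.factorial : ℝ) + 1) ^ (2 ^ n)) * Real.exp (-(p * (n - t).factorial / 400)) ≤
      2 * Real.exp (-n) := by
  have hn3 : (3:ℝ) ≤ n := by exact_mod_cast hn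
  have hf : (0:ℝ) < ((n - t).factorial : ℝ) := by positivity
  have hln1 : 1 ≤ Real.log n := by
    rw [Real.le_log_iff_exp_le (by linarith)]
    have := Real.exp_one_lt_d9
    linarith
  have hlogb : Real.log n ≤ Real.logb 2 n := by
    unfold Real.logb
    rw [le_div_iff₀ (Real.log_pos (by norm_num))]
    have : Real.log 2 ≤ 1 := by
      have := Real.log_two_lt_d9
      linarith
    nlinarith
  have hpow : (2:ℝ) ^ n ≤ 2 ^ (2 * n - 2 * t) := pow_le_pow_right₀ (by norm_num) (by omega)
  have hp0 : 0 ≤ p := by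
    refine le_trans ?_ hp
    have : 0 ≤ Real.logb 2 n := by linarith
    positivity
  refine ⟨hp0, ?_⟩
  rw [div_le_iff₀ hf] at hp
  set L := Real.log n with hL
  have h1 : 2 * n * 2 ^ n * L ≤ p * (n - t).factorial / 400 := by
    have : 800 * (n:ℝ) * 2 ^ n * L ≤ 800 * (n : ℝ) * (2 : ℝ) ^ (2 * n - 2 * t) * Real.logb 2 n := by
      gcongr
    linarith
  have h2 : ((n.factorial : ℝ) + 1) ^ (2 ^ n) ≤ Real.exp (2 ^ n * ((n + 1) * L)) := by
    have e : Real.exp (2 ^ n * ((n + 1) * L)) = ((n:ℝ) ^ (n + 1)) ^ (2 ^ n) := by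
      have a1 : ((2:ℝ) ^ n * ((n + 1) * L)) = ((2 ^ n : ℕ) : ℝ) * (((n + 1 : ℕ) : ℝ) * L) := by
        push_cast; ring
      rw [a1, Real.exp_nat_mul, Real.exp_nat_mul, Real.exp_log (by linarith)]
    rw [e]
    apply pow_le_pow_left₀ (by positivity)
    have a2 : (n.factorial : ℝ) ≤ (n:ℝ) ^ n := by exact_mod_cast n.factorial_le_pow
    have a3 : (1:ℝ) ≤ (n:ℝ) ^ n := one_le_pow₀ (by linarith)
    rw [pow_succ]
    nlinarith
  have h2n : (2:ℝ) ≤ 2 ^ n := by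
    calc (2:ℝ) = 2 ^ 1 := by norm_num
      _ ≤ 2 ^ n := pow_le_pow_right₀ (by norm_num) (by omega)
  have hq : (2:ℝ) ≤ 2 ^ n * L := by nlinarith
  have h3 : (n:ℝ) ≤ 2 * n * 2 ^ n * L := by nlinarith
  have h4 : (n:ℝ) ≤ 2 * n * 2 ^ n * L - 2 ^ n * ((n + 1) * L) := by
    have : 2 * n * 2 ^ n * L - 2 ^ n * ((n + 1) * L) = (n - 1) * (2 ^ n * L) := by ring
    rw [this]
    nlinarith
  rw [add_mul, one_mul]
  have h5 : Real.exp (-(p * (n - t).factorial / 400)) ≤ Real.exp (-n) :=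
    Real.exp_le_exp.2 (by linarith)
  have h6 : ((n.factorial : ℝ) + 1) ^ (2 ^ n) * Real.exp (-(p * (n - t).factorial / 400)) ≤
      Real.exp (-n) := by
    refine (mul_le_mul_of_nonneg_right h2 (Real.exp_pos _).le).trans ?_
    rw [← Real.exp_add]
    exact Real.exp_le_exp.2 (by linarith)
  linarith

end Final

theorem sparse_Ellis_Friedgut_Pilpel (t : ℕ) (ht : 1 ≤ t) (ε : ℝ) (hε : 0 < ε) :
    ∃ n₀ : ℕ, ∀ n : ℕ, n₀ ≤ n → ∀ p : ℝ,
      800 * (n : ℝ) * (2 : ℝ) ^ (2 * n - 2 * t) * Real.logb 2 n /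
          ((n - t).factorial : ℝ) ≤ p →
      p ≤ 1 →
      1 - ε ≤ randomSubsetProb (Finset.univ : Finset (Equiv.Perm (Fin n))) p
        (fun W => ∀ F ⊆ W, IsTIntersecting t F →
          (∀ G ⊆ W, IsTIntersecting t G → G.card ≤ F.card) → IsTrivial t F) := by
  obtain ⟨n₁, hn₁⟩ := stability t
  have hlim : Filter.Tendsto (fun n : ℕ => Real.exp (-(n:ℝ))) Filter.atTop (nhds 0) :=
    Real.tendsto_exp_neg_atTop_nhds_zero.comp tendsto_natCast_atTop_atTop
  obtain ⟨n₂, hn₂⟩ := Filter.eventually_atTop.1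
    (hlim.eventually (gt_mem_nhds (show (0:ℝ) < ε / 2 by positivity)))
  refine ⟨n₁ + n₂ + 2 * t + 3, fun n hn p hp hp1 => ?_⟩
  obtain ⟨hp0, hle⟩ := final_arith n t (by omega) (by omega) p hp
  have h := bad_event (n := n) (t := t) (by omega) (hn₁ n (by omega)) p hp0 hp1
  have h2 : Real.exp (-(n:ℝ)) < ε / 2 := hn₂ n (by omega)
  linarith
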